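/- Let h ∈ ℕ, let G be an h × h real matrix, and let M₂₂ be the 2h × 2h block matrix with blocks [[0, (1/2)G], [0, 0]]. Then M₂₂² = 0, and for every 2h × 2h diagonal real matrix Δ, (M₂₂Δ)² = 0; consequently I - M₂₂Δ is invertible with inverse I + M₂₂Δ and det(I - M₂₂Δ) = 1 for every diagonal Δ. -/

import Mathlib

open Matrix

/-- The LP-GRNN nonlinearity-coupling block `M₂₂ = [[0, (1/2)G], [0, 0]]`. -/
noncomputable def lpgrnnM22 {h : ℕ} (G : Matrix (Fin h) (Fin h) ℝ) :
    Matrix (Fin h ⊕ Fin h) (Fin h ⊕ Fin h) ℝ :=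
  Matrix.fromBlocks 0 ((1 / 2 : ℝ) • G) 0 0

/-- `M₂₂² = 0`, and for every diagonal `Δ` one has `(M₂₂Δ)² = 0`;
consequently `I - M₂₂Δ` is invertible with inverse `I + M₂₂Δ` and
`det(I - M₂₂Δ) = 1` for every diagonal `Δ`. -/
theorem lpgrnn_M22_wellPosed {h : ℕ} (G : Matrix (Fin h) (Fin h) ℝ) :
    (lpgrnnM22 G) ^ 2 = 0 ∧
    ∀ Δ : Matrix (Fin h ⊕ Fin h) (Fin h ⊕ Fin h) ℝ, Δ.IsDiag →
      (lpgrnnM22 G * Δ) ^ 2 = 0 ∧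
      (1 - lpgrnnM22 G * Δ) * (1 + lpgrnnM22 G * Δ) = 1 ∧
      (1 + lpgrnnM22 G * Δ) * (1 - lpgrnnM22 G * Δ) = 1 ∧
      IsUnit (1 - lpgrnnM22 G * Δ) ∧
      (1 - lpgrnnM22 G * Δ)⁻¹ = 1 + lpgrnnM22 G * Δ ∧
      (1 - lpgrnnM22 G * Δ).det = 1 := by
  refine ⟨?_, ?_⟩
  · simp [lpgrnnM22, pow_two, Matrix.fromBlocks_multiply]
  intro Δ hΔ
  have hb : Δ.toBlocks₂₁ = 0 := by
    ext i j
    exact hΔ (by simp)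
  obtain ⟨B, hB⟩ : ∃ B : Matrix (Fin h) (Fin h) ℝ,
      lpgrnnM22 G * Δ = Matrix.fromBlocks 0 B 0 0 := by
    refine ⟨((1 / 2 : ℝ) • G) * Δ.toBlocks₂₂, ?_⟩
    conv_lhs => rw [← Matrix.fromBlocks_toBlocks Δ, hb]
    simp [lpgrnnM22, Matrix.fromBlocks_multiply]
  have hsq : (lpgrnnM22 G * Δ) ^ 2 = 0 := by
    rw [hB]
    simp [pow_two, Matrix.fromBlocks_multiply]
  have hdet : (1 - lpgrnnM22 G * Δ).det = 1 := by
    rw [hB, ← Matrix.fromBlocks_one, sub_eq_add_neg, Matrix.fromBlocks_neg,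
      Matrix.fromBlocks_add]
    simp
  generalize lpgrnnM22 G * Δ = N at hsq hdet
  have h1 : (1 - N) * (1 + N) = 1 := by
    have : (1 - N) * (1 + N) = 1 - N ^ 2 := by noncomm_ring
    rw [this, hsq, sub_zero]
  have h2 : (1 + N) * (1 - N) = 1 := by
    have : (1 + N) * (1 - N) = 1 - N ^ 2 := by noncomm_ring
    rw [this, hsq, sub_zero]
  exact ⟨hsq, h1, h2, ⟨⟨_, _, h1, h2⟩, rfl⟩, Matrix.inv_eq_right_inv h1, hdet⟩
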